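/- arXiv:2604.00826 — 2 statements merged into one kernel-verified Lean document; each statement's English description precedes it below -/
import Mathlib

section
/- Recursive feasibility of the hybrid RL-MPC scheme (Proposition 1): Suppose Assumption 2' holds, i.e. there exists a terminal control law κ_f : S → U_d → U_c such that for every x ∈ X_f and every u_d ∈ U_d one has f(x, κ_f(x, u_d), u_d) ∈ X_f, and X_f ⊆ X. Consider any closed-loop evolution defined recursively as follows: x(0) ∈ S and a discrete sequence d⁰ : Fin N → U_d are such that the MPC problem is feasible at (x(0), d⁰); at each time j ∈ ℕ, a feasibility witness u^j : Fin N → U_c for (x(j), d^j) is selected, the inputs u^j_0 and d^j_0 are applied so that x(j+1) = f(x(j), u^j_0, d^j_0), and the next discrete sequence is d^{j+1}_k = d^j_{k+1} for k = 0, …, N−2 and d^{j+1}_{N−1} = δ_j for an arbitrary δ_j ∈ U_d. Then for every j ∈ ℕ the MPC problem is feasible at (x(j), d^j), and in particular the closed-loop trajectory satisfies x(j) ∈ X for all j ∈ ℕ. -/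
/-- The reduced MPC problem is feasible at `(x, d)`: there exist continuous inputs
`u : Fin N → U_c` and states `x_0, …, x_N` with `x_0 = x`,
`x_{k+1} = f(x_k, u_k, d_k)`, `x_k ∈ X` for all `k`, and `x_N ∈ X_f`. -/
def MPCFeasible {S Uc Ud : Type*} (X Xf : Set S) (f : S → Uc → Ud → S) (N : ℕ)
    (x : S) (d : Fin N → Ud) : Prop :=
  ∃ (u : Fin N → Uc) (xs : Fin (N + 1) → S),
    xs 0 = x ∧
    (∀ k : Fin N, xs k.succ = f (xs k.castSucc) (u k) (d k)) ∧
    (∀ k : Fin (N + 1), xs k ∈ X) ∧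
    xs (Fin.last N) ∈ Xf

/-- Recursive feasibility of the hybrid RL-MPC scheme (Proposition 1). -/
theorem mpc_recursive_feasibility
    {S Uc Ud : Type*} [Nonempty Ud] [Finite Ud]
    (X Xf : Set S) (f : S → Uc → Ud → S) (N : ℕ) (hN : 0 < N)
    (hXfX : Xf ⊆ X)
    (κf : S → Ud → Uc)
    (hκ : ∀ x ∈ Xf, ∀ ud : Ud, f x (κf x ud) ud ∈ Xf)
    -- closed-loop states, discrete sequences, selected continuous inputs,
    -- and arbitrary terminal discrete inputs:
    (x : ℕ → S) (d : ℕ → Fin N → Ud) (u : ℕ → Fin N → Uc) (δ : ℕ → Ud)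
    -- the MPC problem is feasible at (x(0), d⁰):
    (hfeas0 : MPCFeasible X Xf f N (x 0) (d 0))
    -- at each time j, u^j is a feasibility witness for (x(j), d^j):
    (hwit : ∀ j : ℕ, MPCFeasible X Xf f N (x j) (d j) →
      ∃ xs : Fin (N + 1) → S,
        xs 0 = x j ∧
        (∀ k : Fin N, xs k.succ = f (xs k.castSucc) (u j k) (d j k)) ∧
        (∀ k : Fin (N + 1), xs k ∈ X) ∧
        xs (Fin.last N) ∈ Xf)
    -- the first inputs are applied to the system:
    (hstep : ∀ j : ℕ, x (j + 1) = f (x j) (u j ⟨0, hN⟩) (d j ⟨0, hN⟩))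
    -- the discrete sequence is shifted and completed with δ_j:
    (hshift : ∀ (j : ℕ) (k : Fin N),
      d (j + 1) k = if h : (k : ℕ) + 1 < N then d j ⟨(k : ℕ) + 1, h⟩ else δ j) :
    (∀ j : ℕ, MPCFeasible X Xf f N (x j) (d j)) ∧ (∀ j : ℕ, x j ∈ X) := by
  have key : ∀ j : ℕ, MPCFeasible X Xf f N (x j) (d j) := by
    intro j
    induction j with
    | zero => exact hfeas0
    | succ j ih =>
      obtain ⟨xs, h0, hdyn, hX, hf⟩ := hwit j ih
      refine ⟨fun k => if h : (k : ℕ) + 1 < N then u j ⟨(k : ℕ) + 1, h⟩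
          else κf (xs (Fin.last N)) (δ j),
        fun k => if h : (k : ℕ) < N then xs ⟨(k : ℕ) + 1, by omega⟩
          else f (xs (Fin.last N)) (κf (xs (Fin.last N)) (δ j)) (δ j), ?_, ?_, ?_, ?_⟩
      · have h1 := hdyn ⟨0, hN⟩
        have h2 : (Fin.castSucc ⟨0, hN⟩ : Fin (N + 1)) = 0 := by ext; simp
        rw [h2, h0, ← hstep j] at h1
        rw [← h1]
        exact dif_pos hN
      · intro k
        rw [hshift j k]
        have hk := k.isLt
        by_cases h : (k : ℕ) + 1 < N
        · simp only [Fin.val_succ, Fin.val_castSucc, h, hk, dif_pos]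
          exact hdyn ⟨(k : ℕ) + 1, h⟩
        · have e : (⟨(k : ℕ) + 1, by omega⟩ : Fin (N + 1)) = Fin.last N := by
            ext; simp only [Fin.val_last]; omega
          simp only [Fin.val_succ, Fin.val_castSucc, h, hk, dif_pos, dif_neg,
            not_false_eq_true, e]
      · intro k
        dsimp only
        split_ifs with h
        · exact hX _
        · exact hXfX (hκ _ hf _)
      · simp only [Fin.val_last, lt_irrefl, dif_neg, not_false_eq_true]
        exact hκ _ hf _
  refine ⟨key, fun j => ?_⟩
  obtain ⟨v, xs, h0, -, hX, -⟩ := key j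
  exact h0 ▸ hX 0
end

section
/- Verification theorem for greedy policies: Let γ ∈ (0,1), let ℓ : S → U → ℝ satisfy |ℓ(x, u)| ≤ M for all x, u, and let J*(x) be the infimum over input sequences u : ℕ → U of ∑_{j=0}^∞ γ^j ℓ(x_j, u_j) along the trajectory from x. Suppose π : S → U is a deterministic policy attaining the infimum in the Bellman equation at every state, i.e. J*(x) = ℓ(x, π(x)) + γ · J*(f(x, π(x))) for all x ∈ S. Then π is optimal: for every x ∈ S, the closed-loop discounted cost J^π(x) := ∑_{j=0}^∞ γ^j ℓ(x_j, π(x_j)) along the trajectory x_0 = x, x_{j+1} = f(x_j, π(x_j)) equals J*(x). -/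
/-- Trajectory of the deterministic system `f` from `x` under input sequence `u`. -/
def traj {S U : Type*} (f : S → U → S) (x : S) (u : ℕ → U) : ℕ → S
  | 0 => x
  | j + 1 => f (traj f x u j) (u j)

/-- Optimal cost: infimum over input sequences of the discounted infinite-horizon cost. -/
noncomputable def Jstar {S U : Type*} [Nonempty U] (f : S → U → S) (γ : ℝ)
    (ℓ : S → U → ℝ) (x : S) : ℝ :=
  ⨅ u : ℕ → U, ∑' j : ℕ, γ ^ j * ℓ (traj f x u j) (u j)

/-- Closed-loop trajectory of the system `f` from `x` under deterministic policy `π`. -/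
def trajPolicy {S U : Type*} (f : S → U → S) (π : S → U) (x : S) : ℕ → S
  | 0 => x
  | j + 1 => f (trajPolicy f π x j) (π (trajPolicy f π x j))

/-- Closed-loop discounted cost of the deterministic policy `π`. -/
noncomputable def Jpi {S U : Type*} (f : S → U → S) (π : S → U) (γ : ℝ)
    (ℓ : S → U → ℝ) (x : S) : ℝ :=
  ∑' j : ℕ, γ ^ j * ℓ (trajPolicy f π x j) (π (trajPolicy f π x j))

/-- Verification theorem for greedy policies: a policy attaining the infimum in the
Bellman equation at every state is optimal. -/
theorem greedy_policy_is_optimal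
    {S U : Type*} [Nonempty U]
    (f : S → U → S) (γ : ℝ) (hγ : 0 < γ) (hγ1 : γ < 1)
    (ℓ : S → U → ℝ) (M : ℝ) (hℓ : ∀ x u, |ℓ x u| ≤ M)
    (π : S → U)
    (hgreedy : ∀ x : S, Jstar f γ ℓ x = ℓ x (π x) + γ * Jstar f γ ℓ (f x (π x))) :
    ∀ x : S, Jpi f π γ ℓ x = Jstar f γ ℓ x := by
  intro x
  have hM : ∀ (y : ℕ → S) (v : ℕ → U) (j : ℕ), ‖γ ^ j * ℓ (y j) (v j)‖ ≤ M * γ ^ j := by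
    intro y v j
    rw [Real.norm_eq_abs, abs_mul, abs_of_pos (pow_pos hγ j), mul_comm]
    exact mul_le_mul_of_nonneg_right (hℓ _ _) (pow_pos hγ j).le
  have hgeo : HasSum (fun j : ℕ => M * γ ^ j) (M * (1 - γ)⁻¹) :=
    (hasSum_geometric_of_lt_one hγ.le hγ1).mul_left M
  have hb : ∀ (y : S) (u : ℕ → U),
      |∑' j : ℕ, γ ^ j * ℓ (traj f y u j) (u j)| ≤ M * (1 - γ)⁻¹ := by
    intro y u
    rw [← Real.norm_eq_abs]
    exact tsum_of_norm_bounded hgeo (hM (traj f y u) u)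
  have hJ : ∀ y : S, |Jstar f γ ℓ y| ≤ M * (1 - γ)⁻¹ := by
    intro y
    unfold Jstar
    rw [abs_le]
    constructor
    · exact le_ciInf fun u => (abs_le.mp (hb y u)).1
    · obtain ⟨a⟩ := ‹Nonempty U›
      refine le_trans (ciInf_le ⟨-(M * (1 - γ)⁻¹), ?_⟩ (fun _ => a)) (abs_le.mp (hb y _)).2
      rintro _ ⟨u, rfl⟩
      exact (abs_le.mp (hb y u)).1
  have hpart : ∀ n : ℕ, ∑ j ∈ Finset.range n,
      γ ^ j * ℓ (trajPolicy f π x j) (π (trajPolicy f π x j))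
      = Jstar f γ ℓ x - γ ^ n * Jstar f γ ℓ (trajPolicy f π x n) := by
    intro n
    induction n with
    | zero => simp [trajPolicy]
    | succ n ih =>
      rw [Finset.sum_range_succ, ih, hgreedy (trajPolicy f π x n)]
      simp only [trajPolicy]
      ring
  have hsum : Summable fun j : ℕ =>
      γ ^ j * ℓ (trajPolicy f π x j) (π (trajPolicy f π x j)) :=
    Summable.of_norm_bounded hgeo.summable
      (hM (trajPolicy f π x) (fun j => π (trajPolicy f π x j)))
  have h0 : Filter.Tendsto (fun n : ℕ => γ ^ n * Jstar f γ ℓ (trajPolicy f π x n))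
      Filter.atTop (nhds 0) := by
    have hg : Filter.Tendsto (fun n : ℕ => γ ^ n * (M * (1 - γ)⁻¹)) Filter.atTop (nhds 0) := by
      simpa using (tendsto_pow_atTop_nhds_zero_of_lt_one hγ.le hγ1).mul_const (M * (1 - γ)⁻¹)
    refine squeeze_zero_norm (fun n => ?_) hg
    rw [Real.norm_eq_abs, abs_mul, abs_of_pos (pow_pos hγ n)]
    exact mul_le_mul_of_nonneg_left (hJ _) (pow_pos hγ n).le
  have h1 := hsum.hasSum.tendsto_sum_nat
  simp only [hpart] at h1
  have h2 := h0.const_sub (Jstar f γ ℓ x)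
  rw [sub_zero] at h2
  exact tendsto_nhds_unique h1 h2
end
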